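/- Let ε_g : ℝ → ℝ be differentiable, let a, b : ℝ → ℝ be twice differentiable, define u : ℝ³ → ℝ by u(x,y,z) = a(z) + b(z)(x² + y²), and let R > 0. Then for every s ∈ ℝ, the integral of ∇·(ε_g ∇u)(·,·,s) over the disk {(x,y) : x² + y² ≤ R²} equals πR² [ε_g(s)(4 b(s) + a''(s)) + ε_g'(s) a'(s)] + (πR⁴/2) [ε_g(s) b''(s) + ε_g'(s) b'(s)]. -/

import Mathlib

open MeasureTheory Real

/-!
On a section `z = s` the function `∇·(ε ∇u)` is affine in `ρ = x² + y²`. The map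
`(x, y) ↦ x² + y²` pushes Lebesgue measure on the plane forward to `π` times Lebesgue measure on
`[0, ∞)`, so the integral over the disk of radius `R` is `π` times the integral of an affine
function over `[0, R²]`.
-/

open scoped Topology

section Divergence

variable {𝕜 : Type*} [NontriviallyNormedField 𝕜]

/-- The divergence `∇·(ε ∇u)` at `(x, y, z)`, in coordinates, for a coefficient `ε` that depends on
`z` only. It is the operator of the gas equation; the derivatives are `deriv`, so that it carries
its meaning only where the functions involved are differentiable. -/
noncomputable def divMulGrad (ε : 𝕜 → 𝕜) (u : 𝕜 → 𝕜 → 𝕜 → 𝕜) (x y z : 𝕜) : 𝕜 :=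
  deriv (fun t ↦ ε z * deriv (fun t' ↦ u t' y z) t) x
    + deriv (fun t ↦ ε z * deriv (fun t' ↦ u x t' z) t) y
    + deriv (fun t ↦ ε t * deriv (fun t' ↦ u x y t') t) z

theorem deriv_const_mul_deriv_const_add_mul_sq_add (ε α β c x : 𝕜) :
    deriv (fun t ↦ ε * deriv (fun t' ↦ α + β * (t' ^ 2 + c)) t) x = 2 * ε * β := by
  have hderiv : deriv (fun t ↦ α + β * (t ^ 2 + c)) = fun t ↦ β * (2 * t) := by
    funext t
    simp
  simp only [hderiv, deriv_const_mul_field, deriv_const_mul_id']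
  ring

theorem deriv_mul_deriv_add_mul_const {ε a b : 𝕜 → 𝕜} {s : 𝕜} (hε : DifferentiableAt 𝕜 ε s)
    (ha : ∀ᶠ t in 𝓝 s, DifferentiableAt 𝕜 a t) (ha' : DifferentiableAt 𝕜 (deriv a) s)
    (hb : ∀ᶠ t in 𝓝 s, DifferentiableAt 𝕜 b t) (hb' : DifferentiableAt 𝕜 (deriv b) s) (c : 𝕜) :
    deriv (fun t ↦ ε t * deriv (fun t' ↦ a t' + b t' * c) t) s =
      deriv ε s * (deriv a s + deriv b s * c)
        + ε s * (deriv (deriv a) s + deriv (deriv b) s * c) := by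
  have hderiv : (fun t ↦ ε t * deriv (fun t' ↦ a t' + b t' * c) t) =ᶠ[𝓝 s]
      fun t ↦ ε t * (deriv a t + deriv b t * c) := by
    filter_upwards [ha, hb] with t hat hbt
    rw [deriv_fun_add hat (hbt.mul_const c), deriv_mul_const_field]
  rw [hderiv.deriv_eq, deriv_fun_mul hε (ha'.fun_add (hb'.mul_const c)),
    deriv_fun_add ha' (hb'.mul_const c), deriv_mul_const_field]

theorem divMulGrad_add_mul_sq_add_sq {ε a b : 𝕜 → 𝕜} {s : 𝕜} (hε : DifferentiableAt 𝕜 ε s)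
    (ha : ∀ᶠ t in 𝓝 s, DifferentiableAt 𝕜 a t) (ha' : DifferentiableAt 𝕜 (deriv a) s)
    (hb : ∀ᶠ t in 𝓝 s, DifferentiableAt 𝕜 b t) (hb' : DifferentiableAt 𝕜 (deriv b) s) (x y : 𝕜) :
    divMulGrad ε (fun x y z ↦ a z + b z * (x ^ 2 + y ^ 2)) x y s =
      (ε s * (4 * b s + deriv (deriv a) s) + deriv ε s * deriv a s)
        + (ε s * deriv (deriv b) s + deriv ε s * deriv b s) * (x ^ 2 + y ^ 2) := by
  have hy : deriv (fun t ↦ ε s * deriv (fun t' ↦ a s + b s * (x ^ 2 + t' ^ 2)) t) y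
      = 2 * ε s * b s := by
    simp only [add_comm (x ^ 2), deriv_const_mul_deriv_const_add_mul_sq_add]
  rw [divMulGrad, deriv_const_mul_deriv_const_add_mul_sq_add, hy,
    deriv_mul_deriv_add_mul_const hε ha ha' hb hb']
  ring

end Divergence

section RadialIntegral

variable {E : Type*} [NormedAddCommGroup E] [NormedSpace ℝ E]

theorem integral_comp_sq_add_sq (f : ℝ → E) :
    ∫ p : ℝ × ℝ, f (p.1 ^ 2 + p.2 ^ 2) = π • ∫ t in Set.Ioi 0, f t := by
  calc ∫ p : ℝ × ℝ, f (p.1 ^ 2 + p.2 ^ 2)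
      = ∫ z : ℂ, f (‖z‖ ^ 2) := by
        rw [← Complex.volume_preserving_equiv_real_prod.integral_comp
          Complex.measurableEquivRealProd.measurableEmbedding]
        simp only [Complex.measurableEquivRealProd_apply, Complex.sq_norm,
          Complex.normSq_apply, ← sq]
    _ = (2 : ℝ) • π • ∫ r in Set.Ioi (0 : ℝ), r • f (r ^ 2) := by
        simp [integral_fun_norm_addHaar volume fun r ↦ f (r ^ 2), Measure.real,
          ofNat_smul_eq_nsmul]
    _ = π • ∫ r in Set.Ioi (0 : ℝ), (2 * r ^ ((2 : ℝ) - 1)) • f (r ^ (2 : ℝ)) := by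
        have hrpow (r : ℝ) :
            (2 * r ^ ((2 : ℝ) - 1)) • f (r ^ (2 : ℝ)) = (2 : ℝ) • r • f (r ^ 2) := by
          norm_num [mul_smul]
        rw [smul_comm, ← integral_smul]
        simp only [hrpow]
    _ = π • ∫ t in Set.Ioi 0, f t := by
        rw [integral_comp_rpow_Ioi_of_pos two_pos]

theorem setIntegral_comp_sq_add_sq (f : ℝ → E) {T : ℝ} (hT : 0 ≤ T) :
    ∫ p : ℝ × ℝ in {p | p.1 ^ 2 + p.2 ^ 2 ≤ T}, f (p.1 ^ 2 + p.2 ^ 2)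
      = π • ∫ t in 0..T, f t := by
  have hdisk : MeasurableSet {p : ℝ × ℝ | p.1 ^ 2 + p.2 ^ 2 ≤ T} :=
    measurableSet_le (by fun_prop) (by fun_prop)
  calc ∫ p : ℝ × ℝ in {p | p.1 ^ 2 + p.2 ^ 2 ≤ T}, f (p.1 ^ 2 + p.2 ^ 2)
      = ∫ p : ℝ × ℝ, (Set.Iic T).indicator f (p.1 ^ 2 + p.2 ^ 2) :=
        (integral_indicator hdisk).symm
    _ = π • ∫ t in Set.Ioi 0, (Set.Iic T).indicator f t := integral_comp_sq_add_sq _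
    _ = π • ∫ t in 0..T, f t := by
        rw [setIntegral_indicator measurableSet_Iic, Set.Ioi_inter_Iic,
          intervalIntegral.integral_of_le hT]

end RadialIntegral

theorem integral_const_add_mul_id (C D T : ℝ) :
    ∫ t in 0..T, (C + D * t) = C * T + D * T ^ 2 / 2 := by
  rw [intervalIntegral.integral_add intervalIntegrable_const
    (Continuous.intervalIntegrable (by fun_prop) _ _), intervalIntegral.integral_const,
    intervalIntegral.integral_const_mul, integral_id, smul_eq_mul]
  ring

theorem disk_integral_div_eps_grad_general {ε a b : ℝ → ℝ} {s : ℝ} (hε : DifferentiableAt ℝ ε s)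
    (ha : ∀ᶠ t in 𝓝 s, DifferentiableAt ℝ a t) (ha' : DifferentiableAt ℝ (deriv a) s)
    (hb : ∀ᶠ t in 𝓝 s, DifferentiableAt ℝ b t) (hb' : DifferentiableAt ℝ (deriv b) s) (R : ℝ) :
    ∫ p : ℝ × ℝ in {p | p.1 ^ 2 + p.2 ^ 2 ≤ R ^ 2},
        divMulGrad ε (fun x y z ↦ a z + b z * (x ^ 2 + y ^ 2)) p.1 p.2 s
      = π * R ^ 2 * (ε s * (4 * b s + deriv (deriv a) s) + deriv ε s * deriv a s)
        + π * R ^ 4 / 2 * (ε s * deriv (deriv b) s + deriv ε s * deriv b s) := by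
  simp only [divMulGrad_add_mul_sq_add_sq hε ha ha' hb hb']
  rw [setIntegral_comp_sq_add_sq (fun t ↦ _ + _ * t) (sq_nonneg R), integral_const_add_mul_id,
    smul_eq_mul]
  ring

/-- Section integral of `∇·(ε_g ∇u)` for `u(x,y,z) = a(z) + b(z)(x² + y²)`: for every
`s`, the integral of `∇·(ε_g ∇u)(·,·,s)` over the disk `{x² + y² ≤ R²}` equals
`πR² [ε_g(s)(4b(s) + a''(s)) + ε_g'(s) a'(s)] + (πR⁴/2)[ε_g(s) b''(s) + ε_g'(s) b'(s)]`. -/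
theorem disk_integral_div_eps_grad
    (εg : ℝ → ℝ) (hε : Differentiable ℝ εg)
    (a b : ℝ → ℝ)
    (ha : Differentiable ℝ a) (ha' : Differentiable ℝ (deriv a))
    (hb : Differentiable ℝ b) (hb' : Differentiable ℝ (deriv b))
    (R : ℝ) (hR : 0 < R) :
    ∀ s : ℝ,
      ∫ p : ℝ × ℝ in {p : ℝ × ℝ | p.1 ^ 2 + p.2 ^ 2 ≤ R ^ 2},
          (deriv (fun t => εg s * deriv (fun t' => a s + b s * (t' ^ 2 + p.2 ^ 2)) t) p.1
            + deriv (fun t => εg s * deriv (fun t' => a s + b s * (p.1 ^ 2 + t' ^ 2)) t) p.2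
            + deriv (fun t => εg t * deriv (fun t' => a t' + b t' * (p.1 ^ 2 + p.2 ^ 2)) t) s)
        = Real.pi * R ^ 2
            * (εg s * (4 * b s + deriv (deriv a) s) + deriv εg s * deriv a s)
          + Real.pi * R ^ 4 / 2
            * (εg s * deriv (deriv b) s + deriv εg s * deriv b s) := fun s ↦
  disk_integral_div_eps_grad_general (hε s) (.of_forall ha) (ha' s) (.of_forall hb) (hb' s) R
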